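/- Let 0 < ε* and C > 0, let Y = {y₀, y₀+d₁, …, y₀+d_p} ⊆ ℝⁿ, let L = [d₁ ⋯ d_p] ∈ ℝ^{n×p} have full column rank with κ(L) = ‖L†‖‖L‖ satisfying Cε*κ(L) < 1, and let B = [−𝟙 I_p]. Suppose P̄ ∈ ℝ^{n×p} is such that there exist Ẽ ∈ ℝ^{p×n} and F̃ ∈ ℝ^{n×p} with P̄ + F̃ = (Lᵀ + Ẽ)†, ‖Ẽ‖ ≤ Cε*‖L‖, ‖F̃‖ ≤ Cε*‖P̄‖, and suppose f̄(y) = (1+ε_y)f(y) with |ε_y| ≤ ε* for every y ∈ Y. Let f_M = max{|f(y)| : y ∈ Y}, 𝕗 = (f(y₀), f(y₀+d₁), …, f(y₀+d_p))ᵀ and 𝕗̄ the corresponding vector of f̄ values. Then ‖(Lᵀ)†B𝕗 − P̄B𝕗̄‖ ≤ 2√p·f_M·‖L†‖·ε*·( √2·C·κ(L)/(1 − Cκ(L)ε*) + (C+1)/((1 − Cε*)(1 − Cκ(L)ε*)) ). -/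

import Mathlib

/-!
Write `R = (Lᵀ)†` and `Q = (Lᵀ + Ẽ)†`, so `P̄ = Q - F̃`. With `u = B𝕗` and `ū = B𝕗̄`,
`R u - P̄ ū = (R - Q) u + F̃ u + P̄ (u - ū)`. Entries of `u` are differences of two function values,
hence `‖u‖ ≤ 2√p f_M`, and similarly `‖u - ū‖ ≤ 2√p f_M ε*`. This leaves `‖R - Q‖` and `‖P̄‖`.

* Since `Lᵀ R = 1` and `‖R‖‖Ẽ‖ ≤ Cκε* < 1`, the perturbed matrix has full row rank and
  `‖Q‖ ≤ ‖R‖ / (1 - Cκε*)` (`norm_perturbed_mpInv`); then `‖P̄‖ ≤ ‖Q‖ / (1 - Cε*)`, where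
  `Cε* < 1` because `κ ≥ 1` (for `p > 0`; the case `p = 0` is trivial).
* `norm_mpInv_sub` bounds `‖R - Q‖`: the difference splits into two pieces with orthogonal ranges,
  each of norm at most `‖R‖²‖Ẽ‖ / (1 - Cκε*)`, which is where the factor `√2` comes from.
-/

open scoped Matrix
noncomputable section

/-- `N` is the Moore–Penrose pseudoinverse of `M` (the four Penrose equations). -/
def IsMPInv {m n : ℕ} (M : Matrix (Fin m) (Fin n) ℝ) (N : Matrix (Fin n) (Fin m) ℝ) : Prop :=
  M * N * M = M ∧ N * M * N = N ∧ (M * N)ᵀ = M * N ∧ (N * M)ᵀ = N * M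

/-- View a plain vector in `ℝⁿ` as an element of Euclidean space (with the ℓ² norm). -/
def toE {n : ℕ} (v : Fin n → ℝ) : EuclideanSpace ℝ (Fin n) :=
  (WithLp.equiv 2 (Fin n → ℝ)).symm v

/-- The spectral (ℓ² operator) norm of a matrix. -/
noncomputable def spec {m n : ℕ} (A : Matrix (Fin m) (Fin n) ℝ) : ℝ :=
  ‖LinearMap.toContinuousLinearMap (Matrix.toEuclideanLin A)‖

open scoped Matrix.Norms.L2Operator

lemma spec_eq_l2 {m n : ℕ} (A : Matrix (Fin m) (Fin n) ℝ) : spec A = ‖A‖ := rfl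

lemma l2_transpose {m n : ℕ} (A : Matrix (Fin m) (Fin n) ℝ) : ‖Aᵀ‖ = ‖A‖ := by
  rw [← Matrix.conjTranspose_eq_transpose_of_trivial, Matrix.l2_opNorm_conjTranspose]

lemma l2_transpose_mul_self {m n : ℕ} (A : Matrix (Fin m) (Fin n) ℝ) :
    ‖Aᵀ * A‖ = ‖A‖ * ‖A‖ := by
  rw [← Matrix.conjTranspose_eq_transpose_of_trivial, Matrix.l2_opNorm_conjTranspose_mul_self]

lemma norm_toE_mulVec_le {m n : ℕ} (A : Matrix (Fin m) (Fin n) ℝ) (v : Fin n → ℝ) :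
    ‖toE (A *ᵥ v)‖ ≤ ‖A‖ * ‖toE v‖ :=
  Matrix.l2_opNorm_mulVec A (toE v)

lemma norm_toE_le {p : ℕ} (v : Fin p → ℝ) (c : ℝ) (hc : 0 ≤ c) (h : ∀ i, |v i| ≤ c) :
    ‖toE v‖ ≤ Real.sqrt p * c := by
  rw [EuclideanSpace.norm_eq]
  refine Real.sqrt_le_iff.2 ⟨by positivity, ?_⟩
  calc ∑ i, ‖(toE v) i‖ ^ 2 ≤ ∑ _i : Fin p, c ^ 2 :=
        Finset.sum_le_sum fun i _ => pow_le_pow_left₀ (norm_nonneg _) (h i) 2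
    _ = (Real.sqrt p * c) ^ 2 := by
        rw [mul_pow, Real.sq_sqrt (Nat.cast_nonneg p)]; simp

/-- An orthogonal projection has spectral norm at most one. -/
lemma norm_proj_le_one {n : ℕ} (P : Matrix (Fin n) (Fin n) ℝ) (hs : Pᵀ = P) (hi : P * P = P) :
    ‖P‖ ≤ 1 := by
  have h := l2_transpose_mul_self P
  rw [hs, hi] at h
  nlinarith [norm_nonneg P]

/-- A Moore–Penrose inverse of a matrix of full column rank is a left inverse. -/
lemma mpInv_mul_self_of_rank {n p : ℕ} {L : Matrix (Fin n) (Fin p) ℝ}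
    {N : Matrix (Fin p) (Fin n) ℝ} (hrank : L.rank = p) (h : IsMPInv L N) : N * L = 1 := by
  have hli : LinearIndependent ℝ L.col := by
    rw [linearIndependent_iff_card_eq_finrank_span, Set.finrank, ← Matrix.rank_eq_finrank_span_cols, hrank]
    simp
  have hinj := Matrix.mulVec_injective_iff.2 hli
  refine Matrix.ext_of_mulVec_single fun i => hinj ?_
  rw [Matrix.mulVec_mulVec, Matrix.mulVec_mulVec, ← Matrix.mul_assoc, h.1, Matrix.mul_one]

/-- If `M` has right inverse `R` and `‖R‖‖E‖ < 1`, then `M + E` still has full row rank, so its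
Moore–Penrose inverse is a right inverse. -/
lemma perturbed_mul_mpInv {n p : ℕ} {M E : Matrix (Fin p) (Fin n) ℝ}
    {R Q : Matrix (Fin n) (Fin p) ℝ} (hMR : M * R = 1) (hQ : IsMPInv (M + E) Q)
    (hη : ‖R‖ * ‖E‖ < 1) : (M + E) * Q = 1 := by
  set X := (M + E) * Q - 1 with hX
  have h0 : X * (1 + E * R) = 0 := by
    have : (1 : Matrix (Fin p) (Fin p) ℝ) + E * R = (M + E) * R := by
      rw [Matrix.add_mul, hMR]
    rw [this, ← Matrix.mul_assoc, hX, Matrix.sub_mul, hQ.1]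
    simp
  have h1 : X = -(X * (E * R)) := by
    rw [Matrix.mul_add, Matrix.mul_one] at h0
    exact eq_neg_of_add_eq_zero_left h0
  have h2 : ‖X‖ ≤ ‖X‖ * (‖R‖ * ‖E‖) := by
    calc ‖X‖ = ‖X * (E * R)‖ := by rw [← norm_neg (X * (E * R)), ← h1]
      _ ≤ ‖X‖ * ‖E * R‖ := Matrix.l2_opNorm_mul _ _
      _ ≤ ‖X‖ * (‖R‖ * ‖E‖) := by
        gcongr
        rw [mul_comm]
        exact Matrix.l2_opNorm_mul _ _
  have h3 : ‖X‖ = 0 := by nlinarith [norm_nonneg X]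
  exact sub_eq_zero.1 (norm_eq_zero.1 h3)

/-- Comparing `Q` with `R` through `Q = Q(M + E)R - QER`, where `Q(M + E)` is an orthogonal
projection, bounds `‖Q‖` by `‖R‖ / (1 - ‖R‖‖E‖)`. -/
lemma norm_perturbed_mpInv {n p : ℕ} {M E : Matrix (Fin p) (Fin n) ℝ}
    {R Q : Matrix (Fin n) (Fin p) ℝ} (hMR : M * R = 1) (hQ : IsMPInv (M + E) Q) :
    ‖Q‖ * (1 - ‖R‖ * ‖E‖) ≤ ‖R‖ := by
  have hW : ‖Q * (M + E)‖ ≤ 1 :=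
    norm_proj_le_one _ hQ.2.2.2 (by rw [← Matrix.mul_assoc, hQ.2.1])
  have h1 : Q = Q * (M + E) * R - Q * (E * R) := by
    rw [Matrix.mul_assoc, Matrix.add_mul, hMR, Matrix.mul_add, Matrix.mul_one]
    simp
  have h2 : ‖Q * (M + E) * R‖ ≤ 1 * ‖R‖ :=
    (Matrix.l2_opNorm_mul _ _).trans (by gcongr)
  have h3 : ‖Q * (E * R)‖ ≤ ‖Q‖ * (‖E‖ * ‖R‖) :=
    (Matrix.l2_opNorm_mul _ _).trans (by gcongr; exact Matrix.l2_opNorm_mul _ _)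
  have h4 : ‖Q‖ ≤ ‖Q * (M + E) * R‖ + ‖Q * (E * R)‖ := by
    conv_lhs => rw [h1]
    exact norm_sub_le _ _
  nlinarith

/-- Wedin-type bound: `R - Q = (1 - Q(M + E))R + QER`, and the two summands have orthogonal
ranges, so their squared norms add; each is at most `‖R‖²‖E‖ / (1 - ‖R‖‖E‖)`. -/
lemma norm_mpInv_sub {n p : ℕ} {M E : Matrix (Fin p) (Fin n) ℝ}
    {R Q : Matrix (Fin n) (Fin p) ℝ} (hMR : M * R = 1) (hRM : (R * M)ᵀ = R * M)
    (hQ : IsMPInv (M + E) Q) (hη : ‖R‖ * ‖E‖ < 1) :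
    ‖R - Q‖ * (1 - ‖R‖ * ‖E‖) ≤ Real.sqrt 2 * (‖R‖ ^ 2 * ‖E‖) := by
  have hMQ := perturbed_mul_mpInv hMR hQ hη
  have hQn := norm_perturbed_mpInv hMR hQ
  set W := Q * (M + E) with hWd
  have hWs : Wᵀ = W := hQ.2.2.2
  have hWi : W * W = W := by rw [hWd, ← Matrix.mul_assoc, hQ.2.1]
  have hWQ : W * Q = Q := hQ.2.1
  have hcs : (1 - W)ᵀ = 1 - W := by rw [Matrix.transpose_sub, hWs, Matrix.transpose_one]
  have hci : (1 - W) * (1 - W) = 1 - W := by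
    rw [Matrix.sub_mul, Matrix.mul_sub W, hWi]; simp
  have hcn : ‖1 - W‖ ≤ 1 := norm_proj_le_one _ hcs hci
  set X := (1 - W) * R with hX
  set Y := Q * (E * R) with hY
  have hD : R - Q = X + Y := by
    have : W * R = Q + Y := by
      rw [hWd, Matrix.mul_assoc, Matrix.add_mul, hMR, Matrix.mul_add, Matrix.mul_one]
    rw [hX, Matrix.sub_mul, this, Matrix.one_mul]; abel
  have hXY : Xᵀ * Y = 0 := by
    rw [hX, hY, Matrix.transpose_mul, hcs, Matrix.mul_assoc, ← Matrix.mul_assoc (1 - W),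
      Matrix.sub_mul, hWQ]
    simp
  have hYX : Yᵀ * X = 0 := by
    rw [← Matrix.transpose_transpose X, ← Matrix.transpose_mul, hXY, Matrix.transpose_zero]
  have hcM : (1 - W) * Mᵀ = -((1 - W) * Eᵀ) := by
    have h : (1 - W) * (M + E)ᵀ = 0 := by
      rw [← hcs, ← Matrix.transpose_mul, Matrix.mul_sub, hWd, ← Matrix.mul_assoc, hMQ]
      simp
    rw [Matrix.transpose_add, Matrix.mul_add] at h
    exact eq_neg_of_add_eq_zero_left h
  -- `R = RMR = (RM)ᵀR = MᵀRᵀR` exposes the factor `(1 - W)Mᵀ = -(1 - W)Eᵀ`.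
  have hXe : X = -((1 - W) * Eᵀ * (Rᵀ * R)) := by
    have hR : R = Mᵀ * (Rᵀ * R) := by
      rw [← Matrix.mul_assoc, ← Matrix.transpose_mul, hRM, Matrix.mul_assoc, hMR, Matrix.mul_one]
    calc X = (1 - W) * (Mᵀ * (Rᵀ * R)) := by rw [← hR]
      _ = _ := by rw [← Matrix.mul_assoc, hcM, Matrix.neg_mul]
  have hXn : ‖X‖ ≤ ‖R‖ ^ 2 * ‖E‖ := by
    rw [hXe, norm_neg]
    calc ‖(1 - W) * Eᵀ * (Rᵀ * R)‖ ≤ ‖(1 - W) * Eᵀ‖ * ‖Rᵀ * R‖ := Matrix.l2_opNorm_mul _ _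
      _ ≤ (‖1 - W‖ * ‖Eᵀ‖) * (‖R‖ * ‖R‖) := by
        rw [l2_transpose_mul_self]
        gcongr
        exact Matrix.l2_opNorm_mul _ _
      _ ≤ (1 * ‖E‖) * (‖R‖ * ‖R‖) := by
        rw [l2_transpose]; gcongr
      _ = _ := by ring
  have hYn : ‖Y‖ ≤ ‖Q‖ * (‖E‖ * ‖R‖) :=
    (Matrix.l2_opNorm_mul _ _).trans (by gcongr; exact Matrix.l2_opNorm_mul _ _)
  have hsq : ‖R - Q‖ ^ 2 ≤ ‖X‖ ^ 2 + ‖Y‖ ^ 2 := by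
    have h := l2_transpose_mul_self (R - Q)
    have h' : (R - Q)ᵀ * (R - Q) = Xᵀ * X + Yᵀ * Y := by
      rw [hD, Matrix.transpose_add, Matrix.add_mul, Matrix.mul_add, Matrix.mul_add, hXY, hYX]
      simp
    have h'' := norm_add_le (Xᵀ * X) (Yᵀ * Y)
    rw [← h', h, l2_transpose_mul_self, l2_transpose_mul_self] at h''
    nlinarith
  set δ := 1 - ‖R‖ * ‖E‖ with hδ
  have hδ0 : 0 ≤ δ := by linarith
  have hδ1 : δ ≤ 1 := by
    have : 0 ≤ ‖R‖ * ‖E‖ := by positivity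
    linarith
  set t := ‖R‖ ^ 2 * ‖E‖ with ht
  have ht0 : 0 ≤ t := by positivity
  have hXδ : ‖X‖ * δ ≤ t := by nlinarith [norm_nonneg X]
  have hYδ : ‖Y‖ * δ ≤ t := by
    calc ‖Y‖ * δ ≤ (‖Q‖ * (‖E‖ * ‖R‖)) * δ := by gcongr
      _ = (‖Q‖ * δ) * (‖E‖ * ‖R‖) := by ring
      _ ≤ ‖R‖ * (‖E‖ * ‖R‖) := by gcongr
      _ = t := by rw [ht]; ring
  refine abs_le_of_sq_le_sq' ?_ (by positivity) |>.2
  have e1 : (‖X‖ * δ) ^ 2 ≤ t ^ 2 := by gcongr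
  have e2 : (‖Y‖ * δ) ^ 2 ≤ t ^ 2 := by gcongr
  rw [mul_pow, mul_pow, Real.sq_sqrt (by norm_num)]
  nlinarith [mul_le_mul_of_nonneg_right hsq (sq_nonneg δ)]

/-- `B = [-𝟙 I]` forms the differences against the value at the base point. -/
lemma diffMatrix_mulVec {p : ℕ} (w : Fin (p + 1) → ℝ) (i : Fin p) :
    ((Matrix.of fun (i : Fin p) (j : Fin (p + 1)) =>
      if (j : ℕ) = 0 then (-1 : ℝ) else if (j : ℕ) = (i : ℕ) + 1 then 1 else 0) *ᵥ w) i
      = w i.succ - w 0 := by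
  simp only [Matrix.mulVec, dotProduct, Matrix.of_apply, Fin.sum_univ_succ]
  simp [Fin.val_inj]
  ring

/-- **A tighter floating point error bound for the generalized simplex gradient.**
`‖(Lᵀ)†B𝕗 − P̄B𝕗̄‖ ≤ 2√p·f_M·‖L†‖·ε*·(√2Cκ(L)/(1 − Cκ(L)ε*)
  + (C+1)/((1 − Cε*)(1 − Cκ(L)ε*)))`. -/
theorem gsg_tighter_floating_point_error {n p : ℕ} (εs C : ℝ) (hεs : 0 < εs) (hC : 0 < C)
    (y₀ : EuclideanSpace ℝ (Fin n)) (d : Fin p → EuclideanSpace ℝ (Fin n))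
    (L : Matrix (Fin n) (Fin p) ℝ) (hL : L = Matrix.of fun i j => d j i)
    (hrank : L.rank = p)
    (Ldag : Matrix (Fin p) (Fin n) ℝ) (hLdag : IsMPInv L Ldag)
    (κ : ℝ) (hκ : κ = spec Ldag * spec L) (hcond : C * εs * κ < 1)
    (B : Matrix (Fin p) (Fin (p + 1)) ℝ)
    (hB : B = Matrix.of fun (i : Fin p) (j : Fin (p + 1)) =>
      if (j : ℕ) = 0 then (-1 : ℝ) else if (j : ℕ) = (i : ℕ) + 1 then 1 else 0)
    (Pbar : Matrix (Fin n) (Fin p) ℝ)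
    (Et : Matrix (Fin p) (Fin n) ℝ) (Ft : Matrix (Fin n) (Fin p) ℝ)
    (Q : Matrix (Fin n) (Fin p) ℝ) (hQ : IsMPInv (Lᵀ + Et) Q)
    (hPbar : Pbar + Ft = Q)
    (hEt : spec Et ≤ C * εs * spec L) (hFt : spec Ft ≤ C * εs * spec Pbar)
    (f fbar : EuclideanSpace ℝ (Fin n) → ℝ)
    (ε : Fin (p + 1) → ℝ) (hε : ∀ i, |ε i| ≤ εs)
    (y : Fin (p + 1) → EuclideanSpace ℝ (Fin n))
    (hy : y = Fin.cons y₀ fun i => y₀ + d i)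
    (hfbar : ∀ i, fbar (y i) = (1 + ε i) * f (y i))
    (fM : ℝ) (hfM : fM = ⨆ i, |f (y i)|) :
    ‖toE (Matrix.mulVec Ldagᵀ (Matrix.mulVec B fun i => f (y i)))
        - toE (Matrix.mulVec Pbar (Matrix.mulVec B fun i => fbar (y i)))‖
      ≤ 2 * Real.sqrt p * fM * spec Ldag * εs
          * (Real.sqrt 2 * C * κ / (1 - C * κ * εs)
              + (C + 1) / ((1 - C * εs) * (1 - C * κ * εs))) := by
  rcases Nat.eq_zero_or_pos p with rfl | hp
  · have h0 : ∀ A : Matrix (Fin n) (Fin 0) ℝ, ∀ v, A *ᵥ v = 0 := fun A v => by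
      ext i; simp [Matrix.mulVec, dotProduct]
    simp [h0]
  have : NeZero p := ⟨hp.ne'⟩
  have hLL := mpInv_mul_self_of_rank hrank hLdag
  simp only [spec_eq_l2] at *
  have hκ1 : 1 ≤ κ := by
    have h1 : ‖(1 : Matrix (Fin p) (Fin p) ℝ)‖ = 1 := CStarRing.norm_one
    rw [hκ, ← h1, ← hLL]
    exact Matrix.l2_opNorm_mul _ _
  set R := Ldagᵀ with hR
  have hRn : ‖R‖ = ‖Ldag‖ := l2_transpose _
  have hMR : Lᵀ * R = 1 := by rw [hR, ← Matrix.transpose_mul, hLL, Matrix.transpose_one]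
  have hRM : (R * Lᵀ)ᵀ = R * Lᵀ := by
    rw [hR, ← Matrix.transpose_mul, hLdag.2.2.1, hLdag.2.2.1]
  have hRE : ‖R‖ * ‖Et‖ ≤ C * κ * εs := by
    calc ‖R‖ * ‖Et‖ ≤ ‖Ldag‖ * (C * εs * ‖L‖) := by rw [hRn]; gcongr
      _ = C * κ * εs := by rw [hκ]; ring
  have hκpos : 0 < 1 - C * κ * εs := by linarith
  have hη : ‖R‖ * ‖Et‖ < 1 := by linarith
  have hCε : 0 < 1 - C * εs := by
    have : C * εs * 1 ≤ C * εs * κ := by gcongr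
    linarith
  have hsub : ‖R - Q‖ ≤ ‖Ldag‖ * εs * (Real.sqrt 2 * C * κ / (1 - C * κ * εs)) := by
    have h := norm_mpInv_sub hMR hRM hQ hη
    rw [mul_div_assoc', le_div_iff₀ hκpos]
    calc ‖R - Q‖ * (1 - C * κ * εs) ≤ ‖R - Q‖ * (1 - ‖R‖ * ‖Et‖) := by gcongr
      _ ≤ Real.sqrt 2 * (‖R‖ ^ 2 * ‖Et‖) := h
      _ = Real.sqrt 2 * ‖R‖ * (‖R‖ * ‖Et‖) := by ring
      _ ≤ Real.sqrt 2 * ‖R‖ * (C * κ * εs) := by gcongr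
      _ = _ := by rw [hRn]; ring
  have hQn : ‖Q‖ ≤ ‖Ldag‖ / (1 - C * κ * εs) := by
    rw [le_div_iff₀ hκpos]
    calc ‖Q‖ * (1 - C * κ * εs) ≤ ‖Q‖ * (1 - ‖R‖ * ‖Et‖) := by gcongr
      _ ≤ ‖Ldag‖ := hRn ▸ norm_perturbed_mpInv hMR hQ
  have hPn : ‖Pbar‖ ≤ ‖Ldag‖ / ((1 - C * εs) * (1 - C * κ * εs)) := by
    have h1 : ‖Pbar‖ ≤ ‖Q‖ + ‖Ft‖ := by
      rw [← add_sub_cancel_right Pbar Ft, hPbar]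
      exact norm_sub_le _ _
    rw [mul_comm, ← div_div, le_div_iff₀ hCε]
    linarith
  have hle : ∀ i, |f (y i)| ≤ fM := fun i => by
    rw [hfM]
    exact le_ciSup (f := fun i => |f (y i)|) (Set.finite_range _).bddAbove i
  have hfM0 : 0 ≤ fM := (abs_nonneg _).trans (hle 0)
  set u := B *ᵥ fun i => f (y i) with hu
  set ub := B *ᵥ fun i => fbar (y i) with hub
  have hun : ‖toE u‖ ≤ Real.sqrt p * (2 * fM) := by
    refine norm_toE_le _ _ (by positivity) fun i => ?_
    rw [hu, hB, diffMatrix_mulVec]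
    have := abs_sub (f (y i.succ)) (f (y 0))
    linarith [hle i.succ, hle 0]
  have hdn : ‖toE (u - ub)‖ ≤ Real.sqrt p * (2 * fM * εs) := by
    refine norm_toE_le _ _ (by positivity) fun i => ?_
    have hεf : ∀ j, |ε j * f (y j)| ≤ εs * fM := fun j => by
      rw [abs_mul]; exact mul_le_mul (hε j) (hle j) (abs_nonneg _) hεs.le
    rw [Pi.sub_apply, hu, hub, hB, diffMatrix_mulVec, diffMatrix_mulVec, hfbar, hfbar]
    have e : f (y i.succ) - f (y 0) - ((1 + ε i.succ) * f (y i.succ) - (1 + ε 0) * f (y 0))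
        = ε 0 * f (y 0) - ε i.succ * f (y i.succ) := by ring
    rw [e]
    have := abs_sub (ε 0 * f (y 0)) (ε i.succ * f (y i.succ))
    linarith [hεf i.succ, hεf 0]
  have hsplit : toE (R *ᵥ u) - toE (Pbar *ᵥ ub)
      = toE ((R - Q) *ᵥ u) + toE (Ft *ᵥ u) + toE (Pbar *ᵥ (u - ub)) := by
    have : R *ᵥ u - Pbar *ᵥ ub = (R - Q) *ᵥ u + Ft *ᵥ u + Pbar *ᵥ (u - ub) := by
      rw [← hPbar, Matrix.sub_mulVec, Matrix.add_mulVec, Matrix.mulVec_sub]; abel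
    exact congrArg toE this
  rw [hsplit]
  calc ‖toE ((R - Q) *ᵥ u) + toE (Ft *ᵥ u) + toE (Pbar *ᵥ (u - ub))‖
      ≤ ‖R - Q‖ * ‖toE u‖ + ‖Ft‖ * ‖toE u‖ + ‖Pbar‖ * ‖toE (u - ub)‖ := by
        refine norm_add₃_le.trans ?_
        gcongr <;> exact norm_toE_mulVec_le _ _
    _ ≤ ‖R - Q‖ * (Real.sqrt p * (2 * fM)) + (C * εs * ‖Pbar‖) * (Real.sqrt p * (2 * fM))
        + ‖Pbar‖ * (Real.sqrt p * (2 * fM * εs)) := by gcongr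
    _ = 2 * Real.sqrt p * fM * (‖R - Q‖ + (C + 1) * εs * ‖Pbar‖) := by ring
    _ ≤ 2 * Real.sqrt p * fM * (‖Ldag‖ * εs * (Real.sqrt 2 * C * κ / (1 - C * κ * εs))
        + (C + 1) * εs * (‖Ldag‖ / ((1 - C * εs) * (1 - C * κ * εs)))) := by gcongr
    _ = _ := by ring
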